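/- For every x ∈ 𝓡 with ‖x‖ ≻ ι(0), one has x ⊗ x⁻¹ ∼ ι(1). -/

import Mathlib

/-- The ambient space `𝓡` of decimal representations: an integer part together
with a sequence of digits in `{0,…,9}`. -/
abbrev DecimalRep := ℤ × (ℕ → Fin 10)

namespace DecimalRep

open scoped Classical

/-- The truncation `[x]_k = x₀ + ∑_{i=1}^k x_i / 10^i` of `x` up to the `k`-th
digit, as a rational number. -/
def trunc (x : DecimalRep) (k : ℕ) : ℚ :=
  (x.1 : ℚ) + ∑ i ∈ Finset.range k, ((x.2 i : ℕ) : ℚ) / 10 ^ (i + 1)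

/-- The order `⪯` on `𝓡`: `x ⪯ y` iff every truncation of `x` is at most the
corresponding truncation of `y`. -/
def le (x y : DecimalRep) : Prop := ∀ k : ℕ, trunc x k ≤ trunc y k

/-- The strict order `≺` on `𝓡`. -/
def lt (x y : DecimalRep) : Prop := le x y ∧ x ≠ y

/-- Two decimal representations are equivalent ("have no gap") iff there is no
third element lying between them. -/
def equiv (x y : DecimalRep) : Prop :=
  ¬ ∃ z : DecimalRep, z ≠ x ∧ z ≠ y ∧
      ((le x z ∧ le z y) ∨ (le y z ∧ le z x))

/-- `𝓡₉`: decimal representations ending in an infinite string of nines. -/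
def allNines (x : DecimalRep) : Prop := ∃ N : ℕ, ∀ k ≥ N, x.2 k = 9

/-- `ℚ_F`: decimal representations ending in an infinite string of zeros. -/
def finiteDec (x : DecimalRep) : Prop := ∃ N : ℕ, ∀ k ≥ N, x.2 k = 0

/-- The decimal expansion map `ι : ℚ → 𝓡`, satisfying
`[ι(α)]_k = ⌊10^k·α⌋/10^k` for all `k`. -/
def iota (α : ℚ) : DecimalRep :=
  (⌊α⌋, fun k => ⟨(⌊α * 10 ^ (k + 1)⌋ % 10).toNat, by
    have h1 : (0 : ℤ) ≤ ⌊α * 10 ^ (k + 1)⌋ % 10 := Int.emod_nonneg _ (by norm_num)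
    have h2 : ⌊α * 10 ^ (k + 1)⌋ % 10 < 10 := Int.emod_lt_of_pos _ (by norm_num)
    omega⟩)

/-- `M` is a least upper bound of `W` in `(𝓡,⪯)`. -/
def IsLub (W : Set DecimalRep) (M : DecimalRep) : Prop :=
  (∀ w ∈ W, le w M) ∧ ∀ M' : DecimalRep, (∀ w ∈ W, le w M') → le M M'

/-- `M` is a greatest lower bound of `W` in `(𝓡,⪯)`. -/
def IsGlb (W : Set DecimalRep) (M : DecimalRep) : Prop :=
  (∀ w ∈ W, le M w) ∧ ∀ M' : DecimalRep, (∀ w ∈ W, le M' w) → le M' M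

/-- The least upper bound of a set in `(𝓡,⪯)` (junk value if none exists). -/
noncomputable def sup (W : Set DecimalRep) : DecimalRep :=
  if h : ∃ M, IsLub W M then h.choose else default

/-- The greatest lower bound of a set in `(𝓡,⪯)` (junk value if none exists). -/
noncomputable def inf (W : Set DecimalRep) : DecimalRep :=
  if h : ∃ M, IsGlb W M then h.choose else default

/-- Addition `x ⊕ y := sup {ι([x]_k + [y]_k) : k ∈ ℕ}` on `𝓡`. -/
noncomputable def add (x y : DecimalRep) : DecimalRep :=
  sup { z | ∃ k : ℕ, z = iota (trunc x k + trunc y k) }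

/-- The "additive inverse" map `Ψ(x₀.x₁x₂⋯) = (−1−x₀).(9−x₁)(9−x₂)⋯`. -/
def psi (x : DecimalRep) : DecimalRep :=
  (-1 - x.1, fun k => ⟨9 - (x.2 k).val, by have := (x.2 k).isLt; omega⟩)

/-- The signal map: `0` on the nonnegative part, `1` on the negative part. -/
noncomputable def sign (x : DecimalRep) : ℕ :=
  if le (iota 0) x then 0 else 1

/-- The absolute value `‖x‖ := max {x, Ψ(x)}` with respect to `⪯`. -/
noncomputable def norm (x : DecimalRep) : DecimalRep :=
  if le x (psi x) then psi x else x

/-- Multiplication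
`x ⊗ y := Ψ^(sign x + sign y) (sup {ι([‖x‖]_k · [‖y‖]_k) : k ∈ ℕ})` on `𝓡`. -/
noncomputable def mul (x y : DecimalRep) : DecimalRep :=
  psi^[sign x + sign y]
    (sup { z | ∃ k : ℕ, z = iota (trunc (norm x) k * trunc (norm y) k) })

/-- The multiplicative inverse
`x⁻¹ := Ψ^(sign x) (inf {ι(1/[‖x‖]_k) : k ∈ ℕ, [‖x‖]_k > 0})`. -/
noncomputable def inv (x : DecimalRep) : DecimalRep :=
  psi^[sign x]
    (inf { z | ∃ k : ℕ, 0 < trunc (norm x) k ∧ z = iota (1 / trunc (norm x) k) })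

/-- A sequence of rationals is Cauchy. -/
def IsCauchy (x : ℕ → ℚ) : Prop :=
  ∀ ε : ℚ, 0 < ε → ∃ N : ℕ, ∀ m n : ℕ, N ≤ m → N ≤ n → |x m - x n| < ε

/-- The upper limit `inf { sup {f k : k ≥ n} : n ∈ ℕ }` of a sequence in `𝓡`. -/
noncomputable def upperLimit (f : ℕ → DecimalRep) : DecimalRep :=
  inf { z | ∃ n : ℕ, z = sup { w | ∃ k : ℕ, n ≤ k ∧ w = f k } }

/-- The lower limit `sup { inf {f k : k ≥ n} : n ∈ ℕ }` of a sequence in `𝓡`. -/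
noncomputable def lowerLimit (f : ℕ → DecimalRep) : DecimalRep :=
  sup { z | ∃ n : ℕ, z = inf { w | ∃ k : ℕ, n ≤ k ∧ w = f k } }

end DecimalRep

namespace DecimalRep

/-- scaled truncation -/
def sT (x : DecimalRep) : ℕ → ℤ
  | 0 => x.1
  | k+1 => 10 * sT x k + ((x.2 k : ℕ) : ℤ)

theorem trunc_succ (x : DecimalRep) (k : ℕ) :
    trunc x (k+1) = trunc x k + ((x.2 k : ℕ) : ℚ) / 10 ^ (k + 1) := by
  simp only [trunc, Finset.sum_range_succ]; ring

theorem sT_trunc (x : DecimalRep) (k : ℕ) : trunc x k * 10 ^ k = (sT x k : ℚ) := by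
  induction k with
  | zero => simp [trunc, sT]
  | succ k ih =>
    rw [trunc_succ, sT]; push_cast; rw [← ih]; field_simp; ring

theorem trunc_eq (x : DecimalRep) (k : ℕ) : trunc x k = (sT x k : ℚ) / 10 ^ k := by
  rw [← sT_trunc]; field_simp

theorem le_iff (x y : DecimalRep) : le x y ↔ ∀ k, sT x k ≤ sT y k := by
  unfold le
  refine forall_congr' fun k => ?_
  rw [trunc_eq, trunc_eq, div_le_div_iff_of_pos_right (by positivity)]
  exact_mod_cast Iff.rfl

theorem sT_div (x : DecimalRep) (k : ℕ) : sT x (k+1) / 10 = sT x k := by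
  have := (x.2 k).isLt
  rw [sT]; omega

theorem ext_sT (x y : DecimalRep) (h : ∀ k, sT x k = sT y k) : x = y := by
  apply Prod.ext
  · exact h 0
  · funext k
    have h1 := h (k+1)
    rw [sT, sT, h k] at h1
    apply Fin.ext; omega

theorem le_antisymm' {x y : DecimalRep} (h : le x y) (h' : le y x) : x = y := by
  rw [le_iff] at h h'
  exact ext_sT _ _ fun k => le_antisymm (h k) (h' k)

theorem le_trans' {x y z : DecimalRep} (h : le x y) (h' : le y z) : le x z :=
  fun k => (h k).trans (h' k)

theorem exists_sT (a : ℕ → ℤ) (h : ∀ k, a (k+1) / 10 = a k) : ∃ x, ∀ k, sT x k = a k := by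
  refine ⟨(a 0, fun k => ⟨(a (k+1) % 10).toNat, by omega⟩), fun k => ?_⟩
  induction k with
  | zero => rfl
  | succ k ih =>
    rw [sT, ih]
    have := h k
    simp only
    omega

theorem floor_step (α : ℚ) (k : ℕ) : ⌊α * 10 ^ (k+1)⌋ / 10 = ⌊α * 10 ^ k⌋ := by
  have := Int.floor_div_natCast (α * 10 ^ (k+1)) 10
  push_cast at this
  rw [← this]; congr 1; rw [pow_succ]; field_simp

theorem sT_iota (α : ℚ) (k : ℕ) : sT (iota α) k = ⌊α * 10 ^ k⌋ := by
  induction k with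
  | zero => simp [sT, iota]
  | succ k ih =>
    rw [sT, ih]
    have := floor_step α k
    simp only [iota]
    omega

theorem iota_mono {a b : ℚ} (h : a ≤ b) : le (iota a) (iota b) := by
  rw [le_iff]; intro k
  rw [sT_iota, sT_iota]; gcongr

theorem trunc_iota_le (a : ℚ) (k : ℕ) : trunc (iota a) k ≤ a := by
  rw [trunc_eq, sT_iota, div_le_iff₀ (by positivity)]
  exact Int.floor_le _

theorem lt_trunc_iota (a : ℚ) (k : ℕ) : a - 1 / 10 ^ k < trunc (iota a) k := by
  rw [trunc_eq, sT_iota, lt_div_iff₀ (by positivity), sub_mul]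
  have := Int.sub_one_lt_floor (a * 10 ^ k)
  rw [div_mul_cancel₀ _ (by positivity)]
  exact this

theorem exists_lub (W : Set DecimalRep) (hne : W.Nonempty) (B : DecimalRep)
    (hB : ∀ w ∈ W, le w B) : ∃ M, IsLub W M := by
  have hmax : ∀ k, ∃ w ∈ W, ∀ v ∈ W, sT v k ≤ sT w k := by
    intro k
    have hn : ((fun w => sT w k) '' W).Nonempty := hne.image _
    have hb : BddAbove ((fun w => sT w k) '' W) := by
      refine ⟨sT B k, ?_⟩
      rintro _ ⟨w, hw, rfl⟩
      exact (le_iff _ _).1 (hB w hw) k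
    obtain ⟨w, hw, hwe⟩ := Int.csSup_mem hn hb
    refine ⟨w, hw, fun v hv => ?_⟩
    have := le_csSup hb ⟨v, hv, rfl⟩
    simp only at hwe this
    omega
  choose f hf hfm using hmax
  obtain ⟨M, hM⟩ := exists_sT (fun k => sT (f k) k) (by
    intro k
    have h1 := hfm (k+1) (f k) (hf k)
    have h2 := hfm k (f (k+1)) (hf (k+1))
    have h3 := sT_div (f k) k
    have h4 := sT_div (f (k+1)) k
    omega)
  refine ⟨M, fun w hw => ?_, fun M' h => ?_⟩
  · rw [le_iff]; intro k; rw [hM]; exact hfm k w hw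
  · rw [le_iff]; intro k; rw [hM]; exact (le_iff _ _).1 (h _ (hf k)) k

theorem sup_spec (W : Set DecimalRep) (hne : W.Nonempty) (B : DecimalRep)
    (hB : ∀ w ∈ W, le w B) : IsLub W (sup W) := by
  have h := exists_lub W hne B hB
  rw [sup, dif_pos h]; exact h.choose_spec

theorem inf_spec (W : Set DecimalRep) (hne : W.Nonempty) (B : DecimalRep)
    (hB : ∀ w ∈ W, le B w) : IsGlb W (inf W) := by
  have h : ∃ M, IsGlb W M := by
    obtain ⟨w0, hw0⟩ := hne
    obtain ⟨M, h1, h2⟩ := exists_lub {v | ∀ w ∈ W, le v w} ⟨B, hB⟩ w0 (fun v hv => hv w0 hw0)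
    exact ⟨M, fun w hw => h2 w (fun v hv => hv w hw), fun M' h => h1 M' h⟩
  rw [inf, dif_pos h]; exact h.choose_spec

theorem psi_psi (x : DecimalRep) : psi (psi x) = x := by
  apply Prod.ext
  · simp [psi]
  · funext k
    have := (x.2 k).isLt
    apply Fin.ext; simp only [psi]; omega

theorem trunc_bounds (x : DecimalRep) (k m : ℕ) :
    trunc x k ≤ trunc x (k+m) ∧ trunc x (k+m) + 1 / 10 ^ (k+m) ≤ trunc x k + 1 / 10 ^ k := by
  induction m with
  | zero => simp
  | succ m ih =>
    rw [← add_assoc, trunc_succ]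
    have h : ((x.2 (k+m) : ℕ) : ℚ) ≤ 9 := by
      have := (x.2 (k+m)).isLt
      exact_mod_cast (by omega : (x.2 (k+m) : ℕ) ≤ 9)
    have h0 : (0:ℚ) ≤ ((x.2 (k+m) : ℕ) : ℚ) / 10 ^ (k+m+1) := by positivity
    have h1 : ((x.2 (k+m) : ℕ) : ℚ) / 10 ^ (k+m+1) + 1 / 10 ^ (k+m+1) ≤ 1 / 10 ^ (k+m) := by
      rw [← add_div, div_le_div_iff₀ (by positivity) (by positivity), pow_succ]
      have : (0:ℚ) < 10 ^ (k+m) := by positivity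
      nlinarith
    constructor
    · linarith [ih.1]
    · linarith [ih.2]

theorem trunc_mono (x : DecimalRep) {k m : ℕ} (h : k ≤ m) : trunc x k ≤ trunc x m := by
  obtain ⟨d, rfl⟩ := Nat.exists_eq_add_of_le h
  exact (trunc_bounds x k d).1

theorem trunc_upper (x : DecimalRep) (k m : ℕ) : trunc x m ≤ trunc x k + 1 / 10 ^ k := by
  rcases le_total k m with h | h
  · obtain ⟨d, rfl⟩ := Nat.exists_eq_add_of_le h
    have := (trunc_bounds x k d).2
    have : (0:ℚ) < 1 / 10 ^ (k+d) := by positivity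
    linarith
  · have := trunc_mono x h
    have : (0:ℚ) < 1 / 10 ^ k := by positivity
    linarith

theorem trunc_zero (x : DecimalRep) : trunc x 0 = x.1 := by simp [trunc]

theorem iota_zero_le_iff (x : DecimalRep) : le (iota 0) x ↔ 0 ≤ x.1 := by
  constructor
  · intro h
    have := (le_iff _ _).1 h 0
    rw [sT_iota] at this
    simpa [sT] using this
  · intro h
    rw [le_iff]; intro k
    rw [sT_iota]
    simp only [zero_mul, Int.floor_zero]
    induction k with
    | zero => exact h
    | succ k ih => rw [sT]; omega

theorem norm_of_nonneg {x : DecimalRep} (h : 0 ≤ x.1) : norm x = x := by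
  rw [norm, if_neg]
  intro hl
  have := (le_iff _ _).1 hl 0
  simp only [sT, psi] at this
  omega

theorem norm_of_neg {x : DecimalRep} (h : x.1 < 0) : norm x = psi x := by
  rw [norm]
  split_ifs with hl
  · rfl
  · exfalso
    apply hl
    have h1 : le x (iota 0) ∧ le (iota 0) (psi x) := by
      refine ⟨?_, (iota_zero_le_iff _).2 (by simp only [psi]; omega)⟩
      rw [le_iff]; intro k
      rw [sT_iota]
      simp only [zero_mul, Int.floor_zero]
      have : sT x k ≤ -1 := by
        induction k with
        | zero => simp only [sT]; omega
        | succ k ih =>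
          have := (x.2 k).isLt
          rw [sT]; omega
      omega
    exact le_trans' h1.1 h1.2

theorem sign_psi (x : DecimalRep) : sign x = if 0 ≤ x.1 then 0 else 1 := by
  simp only [sign, iota_zero_le_iff]

theorem norm_nonneg' (x : DecimalRep) : 0 ≤ (norm x).1 := by
  rcases lt_or_ge x.1 0 with h | h
  · rw [norm_of_neg h]; simp only [psi]; omega
  · rwa [norm_of_nonneg h]

theorem core (y : DecimalRep) (hy : 0 ≤ y.1) (hne : y ≠ iota 0) (I : DecimalRep)
    (hI : IsGlb { z | ∃ k : ℕ, 0 < trunc y k ∧ z = iota (1 / trunc y k) } I) :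
    equiv (sup { z | ∃ k : ℕ, z = iota (trunc y k * trunc I k) }) (iota 1) := by
  have hy0 : ∀ k, 0 ≤ trunc y k := fun k => by
    refine le_trans ?_ (trunc_mono y (Nat.zero_le k))
    rw [trunc_zero]; exact_mod_cast hy
  have hprod : ∀ k, trunc y k * trunc I k ≤ 1 := by
    intro k
    rcases (hy0 k).eq_or_lt with h | h
    · rw [← h]; simp
    · have h1 := (hI.1 _ ⟨k, h, rfl⟩ k).trans (trunc_iota_le _ k)
      rw [le_div_iff₀ h] at h1
      linarith
  have hub : ∀ w ∈ { z | ∃ k : ℕ, z = iota (trunc y k * trunc I k) }, le w (iota 1) := by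
    rintro _ ⟨k, rfl⟩
    exact iota_mono (hprod k)
  have hS := sup_spec { z | ∃ k : ℕ, z = iota (trunc y k * trunc I k) } ⟨_, 0, rfl⟩ _ hub
  set S := sup { z | ∃ k : ℕ, z = iota (trunc y k * trunc I k) }
  have hS1 : le S (iota 1) := hS.2 _ hub
  obtain ⟨k0, hk0⟩ : ∃ k, 0 < trunc y k := by
    by_contra! hc
    apply hne
    apply ext_sT
    intro k
    have : trunc y k = 0 := le_antisymm (hc k) (hy0 k)
    rw [sT_iota]
    have h2 := sT_trunc y k
    rw [this, zero_mul] at h2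
    simp only [zero_mul, Int.floor_zero]
    exact_mod_cast h2.symm
  have hlow : ∀ n, 1 - 1 / 10 ^ n ≤ trunc S n := by
    intro n
    set c := trunc y k0
    set C : ℚ := trunc y 0 + 1 with hC
    have hCpos : 0 < C := by have := hy0 0; linarith
    obtain ⟨N, hN⟩ := pow_unbounded_of_one_lt ((1 / c + C) * 10 ^ n) (by norm_num : (1:ℚ) < 10)
    set k := max N k0
    have hk : (1 / c + C) * 10 ^ n ≤ 10 ^ k :=
      hN.le.trans (pow_le_pow_right₀ (by norm_num) (le_max_left _ _))
    have hct : c ≤ trunc y k := trunc_mono y (le_max_right _ _)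
    have htC : trunc y k ≤ C := by simpa using trunc_upper y 0 k
    set t := trunc y k
    have ht : 0 < t := hk0.trans_le hct
    have he : (0:ℚ) < 1 / 10 ^ k := by positivity
    have hIk : le (iota (1 / (t + 1 / 10 ^ k))) I := by
      apply hI.2
      rintro _ ⟨m, hm, rfl⟩
      apply iota_mono
      exact one_div_le_one_div_of_le hm (trunc_upper y k m)
    have h1 := (lt_trunc_iota (1 / (t + 1 / 10 ^ k)) k).trans_le (hIk k)
    have hε : (1 / c + C) * (1 / 10 ^ k) ≤ 1 / 10 ^ n := by
      rw [mul_one_div, div_le_div_iff₀ (by positivity) (by positivity)]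
      linarith
    set ε : ℚ := 1 / 10 ^ k
    have h2 : 1 - (1 / c + C) * ε ≤ t * trunc I k := by
      have h3 : t * (1 / (t + ε) - ε) ≤ t * trunc I k :=
        mul_le_mul_of_nonneg_left h1.le ht.le
      have h4 : t * (1 / (t + ε)) = 1 - 1 / (t + ε) * ε := by field_simp; ring
      have h5 : 1 / (t + ε) ≤ 1 / c := one_div_le_one_div_of_le hk0 (by linarith)
      have h6 := mul_le_mul_of_nonneg_right h5 he.le
      have h7 := mul_le_mul_of_nonneg_right htC he.le
      linarith
    have h3 : le (iota (1 - 1 / 10 ^ n)) S :=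
      le_trans' (iota_mono (by linarith)) (hS.1 _ ⟨k, rfl⟩)
    refine le_trans (le_of_eq ?_) (h3 n)
    rw [trunc_eq, sT_iota]
    have : ((1:ℚ) - 1 / 10 ^ n) * 10 ^ n = ((10 ^ n - 1 : ℤ) : ℚ) := by
      push_cast; field_simp
    rw [this, Int.floor_intCast, ← this]; field_simp
  rintro ⟨z, hz1, hz2, ⟨ha, hb⟩ | ⟨ha, hb⟩⟩
  · apply hz1
    refine le_antisymm' (fun n => le_trans ?_ (hlow n)) ha
    have hz0 : z.1 ≤ 0 := by
      by_contra! hc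
      apply hz2
      refine le_antisymm' hb fun k => (trunc_iota_le 1 k).trans ?_
      refine le_trans ?_ (trunc_mono z (Nat.zero_le k))
      rw [trunc_zero]; exact_mod_cast hc
    have h1 := (trunc_bounds z 0 n).2
    rw [trunc_zero] at h1
    have h2 : (z.1 : ℚ) ≤ 0 := by exact_mod_cast hz0
    simp only [zero_add, pow_zero, div_one] at h1
    linarith
  · exact hz2 (le_antisymm' (le_trans' hb hS1) ha)

end DecimalRep

open DecimalRep in
/-- If `‖x‖ ≻ ι(0)` then `x ⊗ x⁻¹ ∼ ι(1)`. -/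
theorem mul_inv_equiv_one (x : DecimalRep) (hx : lt (iota 0) (norm x)) :
    equiv (mul x (inv x)) (iota 1) := by
  have hy := norm_nonneg' x
  have hB : ∀ w ∈ { z | ∃ k : ℕ, 0 < trunc (norm x) k ∧ z = iota (1 / trunc (norm x) k) },
      le (iota 0) w := by
    rintro _ ⟨k, hk, rfl⟩
    exact iota_mono (by positivity)
  have hne : { z | ∃ k : ℕ, 0 < trunc (norm x) k ∧
      z = iota (1 / trunc (norm x) k) }.Nonempty := by
    by_contra hc
    rw [Set.not_nonempty_iff_eq_empty] at hc
    apply hx.2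
    refine le_antisymm' hx.1 fun k => ?_
    have : ¬ 0 < trunc (norm x) k := fun h => by
      have : iota (1 / trunc (norm x) k) ∈ (∅ : Set DecimalRep) := hc ▸ ⟨k, h, rfl⟩
      exact this
    rw [trunc_eq (iota 0), sT_iota]
    simpa using this
  have hI := inf_spec _ hne _ hB
  have hI0 := (iota_zero_le_iff _).1 (hI.2 _ hB)
  have hcore := core _ hy hx.2.symm _ hI
  have hinv : inv x = psi^[sign x]
    (inf { z | ∃ k : ℕ, 0 < trunc (norm x) k ∧ z = iota (1 / trunc (norm x) k) }) := rfl
  generalize inf { z | ∃ k : ℕ, 0 < trunc (norm x) k ∧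
    z = iota (1 / trunc (norm x) k) } = I at *
  rcases lt_or_ge x.1 0 with h | h
  · have hs : sign x = 1 := by rw [sign_psi, if_neg (by omega)]
    rw [hs] at hinv
    simp only [Function.iterate_one] at hinv
    have hneg : (psi I).1 < 0 := by simp only [psi]; omega
    rw [mul, hs, hinv, sign_psi (psi I), if_neg (by omega), norm_of_neg hneg, psi_psi]
    simpa [psi_psi] using hcore
  · have hs : sign x = 0 := by rw [sign_psi, if_pos h]
    rw [hs] at hinv
    simp only [Function.iterate_zero, id] at hinv
    rw [mul, hs, hinv, sign_psi I, if_pos hI0, norm_of_nonneg hI0]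
    simpa using hcore
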